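/- arXiv:quant-ph/0308088 — 3 statements merged into one kernel-verified Lean document; each statement's English description precedes it below -/
import Mathlib

section
/- Squashed entanglement is continuous on the interior of the set of states: the function ρ^{AB} ↦ E_sq(ρ^{AB}), restricted to the faithful (i.e. positive definite, full-rank) states on H_A ⊗ H_B, is continuous with respect to the trace norm. -/
open Matrix BigOperators Kronecker
open scoped Classical ComplexOrder

noncomputable section

/-- A (quantum) state: positive semidefinite matrix of trace 1. -/
def IsState {n : Type*} [Fintype n] (ρ : Matrix n n ℂ) : Prop :=
  ρ.PosSemidef ∧ ρ.trace = 1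

/-- Von Neumann entropy (base 2), via the eigenvalues of a Hermitian matrix. -/
def vonNeumannEntropy {n : Type*} [Fintype n] (ρ : Matrix n n ℂ) : ℝ :=
  if h : ρ.IsHermitian then ∑ i, -(h.eigenvalues i * Real.logb 2 (h.eigenvalues i)) else 0

/-- Partial trace over the second (right) factor. -/
def ptraceR {A B : Type*} [Fintype A] [Fintype B]
    (ρ : Matrix (A × B) (A × B) ℂ) : Matrix A A ℂ :=
  fun i j => ∑ b, ρ (i, b) (j, b)

/-- Partial trace over the first (left) factor. -/
def ptraceL {A B : Type*} [Fintype A] [Fintype B]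
    (ρ : Matrix (A × B) (A × B) ℂ) : Matrix B B ℂ :=
  fun i j => ∑ a, ρ (a, i) (a, j)

variable {A B E : Type*} [Fintype A] [Fintype B] [Fintype E]

/-- Marginal of a tripartite state on `A × E` (trace out `B`). -/
def margAE (ρ : Matrix (A × B × E) (A × B × E) ℂ) : Matrix (A × E) (A × E) ℂ :=
  fun x y => ∑ b, ρ (x.1, b, x.2) (y.1, b, y.2)

/-- Marginal of a tripartite state on `B × E` (trace out `A`). -/
def margBE (ρ : Matrix (A × B × E) (A × B × E) ℂ) : Matrix (B × E) (B × E) ℂ :=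
  fun x y => ∑ a, ρ (a, x.1, x.2) (a, y.1, y.2)

/-- Marginal of a tripartite state on `E` (trace out `A` and `B`). -/
def margE (ρ : Matrix (A × B × E) (A × B × E) ℂ) : Matrix E E ℂ :=
  fun x y => ∑ a, ∑ b, ρ (a, b, x) (a, b, y)

/-- Marginal of a tripartite state on `A × B` (trace out `E`). -/
def margAB (ρ : Matrix (A × B × E) (A × B × E) ℂ) : Matrix (A × B) (A × B) ℂ :=
  fun x y => ∑ e, ρ (x.1, x.2, e) (y.1, y.2, e)

/-- Quantum conditional mutual information `I(A;B|E) = S(AE)+S(BE)-S(ABE)-S(E)`. -/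
def condMutualInfo (ρ : Matrix (A × B × E) (A × B × E) ℂ) : ℝ :=
  vonNeumannEntropy (margAE ρ) + vonNeumannEntropy (margBE ρ)
    - vonNeumannEntropy ρ - vonNeumannEntropy (margE ρ)

/-- Squashed entanglement: infimum of `(1/2) I(A;B|E)` over all finite-dimensional
extensions of `ρ`. -/
def Esq {A B : Type*} [Fintype A] [Fintype B] (ρ : Matrix (A × B) (A × B) ℂ) : ℝ :=
  sInf { x : ℝ | ∃ (d : ℕ) (ρE : Matrix (A × B × Fin d) (A × B × Fin d) ℂ),
    IsState ρE ∧ margAB ρE = ρ ∧ x = (1 / 2) * condMutualInfo ρE }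

/-- Outer product `|ψ⟩⟨ψ|`. -/
def outer {n : Type*} (ψ : n → ℂ) : Matrix n n ℂ :=
  Matrix.vecMulVec ψ (star ψ)

/-- Trace norm of a Hermitian matrix: sum of the absolute values of its eigenvalues. -/
def traceNorm {n : Type*} [Fintype n] (X : Matrix n n ℂ) : ℝ :=
  if h : X.IsHermitian then ∑ i, |h.eigenvalues i| else 0

/-- Entanglement of formation: infimum of average entanglement entropy over all
finite pure-state ensembles for `ρ`. -/
def EoF {A B : Type*} [Fintype A] [Fintype B] (ρ : Matrix (A × B) (A × B) ℂ) : ℝ :=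
  sInf { x : ℝ | ∃ (n : ℕ) (p : Fin n → ℝ) (ψ : Fin n → A × B → ℂ),
    (∀ k, 0 ≤ p k) ∧ (∑ k, p k) = 1 ∧ (∀ k, ∑ i, ‖ψ k i‖ ^ 2 = 1) ∧
    (∑ k, (p k : ℂ) • outer (ψ k)) = ρ ∧
    x = ∑ k, p k * vonNeumannEntropy (ptraceR (outer (ψ k))) }

/-- The function `η` : `η(x) = -x log₂ x` for `x ≤ 1/4`, `1/2` otherwise. -/
def eta (x : ℝ) : ℝ := if x ≤ 1 / 4 then -(x * Real.logb 2 x) else 1 / 2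

/-- `-x log₂ x`. -/
def etaFun (x : ℝ) : ℝ := -(x * Real.logb 2 x)

theorem etaFun_mul (t x : ℝ) (ht : 0 < t) : etaFun (t * x) = t * etaFun x + x * etaFun t := by
  unfold etaFun
  by_cases hx : x = 0
  · simp [hx]
  · rw [Real.logb_mul ht.ne' hx]; ring

/-- The entropy depends only on the characteristic polynomial. -/
theorem entropy_eq_roots {n : Type*} [Fintype n] {M : Matrix n n ℂ} (h : M.IsHermitian) :
    vonNeumannEntropy M = (M.charpoly.roots.map (fun z : ℂ => etaFun z.re)).sum := by
  rw [h.roots_charpoly_eq_eigenvalues]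
  simp only [vonNeumannEntropy, dif_pos h, Multiset.map_map]
  rfl

theorem roots_smul {n : Type*} [Fintype n] {M : Matrix n n ℂ} (h : M.IsHermitian) (t : ℝ) :
    ((t : ℂ) • M).charpoly.roots =
      Multiset.map (fun i => ((t * h.eigenvalues i : ℝ) : ℂ)) Finset.univ.val := by
  have : ((t : ℂ) • M).charpoly
      = ∏ i, (Polynomial.X - Polynomial.C ((t * h.eigenvalues i : ℝ) : ℂ)) := by
    conv_lhs =>
      rw [h.spectral_theorem, Unitary.conjStarAlgAut_apply, ← Matrix.smul_mul, ← Matrix.mul_smul,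
        charpoly_mul_comm, ← mul_assoc]
    simp only [Unitary.coe_star_mul_self, one_mul]
    rw [← Matrix.diagonal_smul, charpoly_diagonal]
    simp
  rw [this, Polynomial.roots_prod]
  · simp only [Polynomial.roots_X_sub_C, Multiset.bind_singleton]
  · exact Finset.prod_ne_zero_iff.2 fun i _ => Polynomial.X_sub_C_ne_zero _

theorem entropy_smul_sum {n : Type*} [Fintype n] {M : Matrix n n ℂ} (h : M.IsHermitian)
    (htr : M.trace = 1) (t : ℝ) (ht : 0 < t) :
    (((t : ℂ) • M).charpoly.roots.map (fun z : ℂ => etaFun z.re)).sum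
      = t * vonNeumannEntropy M + etaFun t := by
  rw [roots_smul h]
  have h1 : ∑ i, h.eigenvalues i = 1 := by
    have := h.trace_eq_sum_eigenvalues
    rw [htr] at this
    have h2 := congrArg Complex.re this
    simpa using h2.symm
  have h2 : (Multiset.map (fun z : ℂ => etaFun z.re)
      (Multiset.map (fun i => ((t * h.eigenvalues i : ℝ) : ℂ)) Finset.univ.val)).sum
      = ∑ i, etaFun (t * h.eigenvalues i) := by
    rw [Multiset.map_map]; rfl
  rw [h2]
  simp only [etaFun_mul t _ ht, Finset.sum_add_distrib, ← Finset.mul_sum, ← Finset.sum_mul, h1]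
  simp [vonNeumannEntropy, h, etaFun]

/-- Entropy of a direct sum of two weighted states. -/
theorem entropy_block {n m₁ m₂ : Type*} [Fintype n] [Fintype m₁] [Fintype m₂]
    (e : n ≃ m₁ ⊕ m₂) {M₁ : Matrix m₁ m₁ ℂ} {M₂ : Matrix m₂ m₂ ℂ}
    (h₁ : M₁.IsHermitian) (h₂ : M₂.IsHermitian) (t₁ : M₁.trace = 1) (t₂ : M₂.trace = 1)
    (t s : ℝ) (ht : 0 < t) (hs : 0 < s) {M : Matrix n n ℂ}
    (hM : M = (fromBlocks ((t : ℂ) • M₁) 0 0 ((s : ℂ) • M₂)).submatrix e e) :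
    vonNeumannEntropy M
      = t * vonNeumannEntropy M₁ + s * vonNeumannEntropy M₂ + (etaFun t + etaFun s) := by
  have hc₁ : ((t : ℂ) • M₁).IsHermitian := by
    ext i j; simp [Matrix.conjTranspose_apply, ← h₁.apply i j]
  have hc₂ : ((s : ℂ) • M₂).IsHermitian := by
    ext i j; simp [Matrix.conjTranspose_apply, ← h₂.apply i j]
  have hH : M.IsHermitian := by
    rw [hM]
    exact (Matrix.IsHermitian.fromBlocks hc₁ (by simp) hc₂).submatrix e
  have hcp : M.charpoly = ((t : ℂ) • M₁).charpoly * ((s : ℂ) • M₂).charpoly := by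
    rw [← charpoly_fromBlocks_zero₁₂ (M₂₁ := 0), hM, ← charpoly_reindex e]
    simp
  rw [entropy_eq_roots hH, hcp, Polynomial.roots_mul, Multiset.map_add, Multiset.sum_add,
    entropy_smul_sum h₁ t₁ t ht, entropy_smul_sum h₂ t₂ s hs]
  · ring
  · exact mul_ne_zero (charpoly_monic _).ne_zero (charpoly_monic _).ne_zero

/-- Splitting the environment. -/
def eqv (X : Type*) (d₁ d₂ : ℕ) : X × Fin (d₁ + d₂) ≃ (X × Fin d₁) ⊕ (X × Fin d₂) :=
  ((Equiv.refl X).prodCongr finSumFinEquiv.symm).trans (Equiv.prodSumDistrib X (Fin d₁) (Fin d₂))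

/-- Splitting the environment of a tripartite system. -/
def eqv3 (X Y : Type*) (d₁ d₂ : ℕ) :
    X × Y × Fin (d₁ + d₂) ≃ (X × Y × Fin d₁) ⊕ (X × Y × Fin d₂) :=
  ((Equiv.refl X).prodCongr (eqv Y d₁ d₂)).trans (Equiv.prodSumDistrib X _ _)

theorem fromBlocks_posSemidef {m₁ m₂ : Type*} [Fintype m₁] [Fintype m₂]
    {M₁ : Matrix m₁ m₁ ℂ} {M₂ : Matrix m₂ m₂ ℂ}
    (h₁ : M₁.PosSemidef) (h₂ : M₂.PosSemidef) : (fromBlocks M₁ 0 0 M₂).PosSemidef := by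
  refine Matrix.PosSemidef.of_dotProduct_mulVec_nonneg
    (Matrix.IsHermitian.fromBlocks h₁.1 (by simp) h₂.1) fun x => ?_
  have h := add_nonneg (h₁.dotProduct_mulVec_nonneg (x ∘ Sum.inl))
    (h₂.dotProduct_mulVec_nonneg (x ∘ Sum.inr))
  refine h.trans_eq ?_
  rw [fromBlocks_mulVec]
  simp [dotProduct]

theorem margAE_herm {ρ : Matrix (A × B × E) (A × B × E) ℂ} (h : ρ.IsHermitian) :
    (margAE ρ).IsHermitian := by
  ext x y
  simp only [conjTranspose_apply, margAE, star_sum]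
  exact Finset.sum_congr rfl fun b _ => h.apply _ _

theorem margBE_herm {ρ : Matrix (A × B × E) (A × B × E) ℂ} (h : ρ.IsHermitian) :
    (margBE ρ).IsHermitian := by
  ext x y
  simp only [conjTranspose_apply, margBE, star_sum]
  exact Finset.sum_congr rfl fun b _ => h.apply _ _

theorem margE_herm {ρ : Matrix (A × B × E) (A × B × E) ℂ} (h : ρ.IsHermitian) :
    (margE ρ).IsHermitian := by
  ext x y
  simp only [conjTranspose_apply, margE, star_sum]
  exact Finset.sum_congr rfl fun b _ => Finset.sum_congr rfl fun b _ => h.apply _ _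

theorem margAE_trace (ρ : Matrix (A × B × E) (A × B × E) ℂ) : (margAE ρ).trace = ρ.trace := by
  simp only [trace, diag, margAE, Fintype.sum_prod_type]
  exact Finset.sum_congr rfl fun a _ => Finset.sum_comm

theorem margBE_trace (ρ : Matrix (A × B × E) (A × B × E) ℂ) : (margBE ρ).trace = ρ.trace := by
  simp only [trace, diag, margBE, Fintype.sum_prod_type]
  rw [Finset.sum_comm' (t' := Finset.univ) (s' := fun _ => Finset.univ) (by simp)]
  conv_rhs => rw [Finset.sum_comm]
  conv_lhs => rw [Finset.sum_comm]
  exact Finset.sum_congr rfl fun b _ => Finset.sum_comm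

theorem margE_trace (ρ : Matrix (A × B × E) (A × B × E) ℂ) : (margE ρ).trace = ρ.trace := by
  simp only [trace, diag, margE, Fintype.sum_prod_type]
  rw [Finset.sum_comm]
  exact Finset.sum_congr rfl fun b _ => Finset.sum_comm

/-- The set of values over which `Esq` takes the infimum. -/
def valSet {A B : Type*} [Fintype A] [Fintype B] (ρ : Matrix (A × B) (A × B) ℂ) : Set ℝ :=
  { x : ℝ | ∃ (d : ℕ) (ρE : Matrix (A × B × Fin d) (A × B × Fin d) ℂ),
    IsState ρE ∧ margAB ρE = ρ ∧ x = (1 / 2) * condMutualInfo ρE }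

theorem valSet_mix {A B : Type*} [Fintype A] [Fintype B] {ρ₁ ρ₂ : Matrix (A × B) (A × B) ℂ}
    {x y : ℝ} (hx : x ∈ valSet ρ₁) (hy : y ∈ valSet ρ₂) {t s : ℝ} (ht : 0 < t) (hs : 0 < s)
    (hts : t + s = 1) : t * x + s * y ∈ valSet ((t : ℂ) • ρ₁ + (s : ℂ) • ρ₂) := by
  obtain ⟨d₁, R₁, hR₁, rfl, rfl⟩ := hx
  obtain ⟨d₂, R₂, hR₂, rfl, rfl⟩ := hy
  have hct : (0 : ℂ) ≤ (t : ℂ) := by exact_mod_cast ht.le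
  have hcs : (0 : ℂ) ≤ (s : ℂ) := by exact_mod_cast hs.le
  refine ⟨d₁ + d₂, (fromBlocks ((t : ℂ) • R₁) 0 0 ((s : ℂ) • R₂)).submatrix (eqv3 A B d₁ d₂)
    (eqv3 A B d₁ d₂), ⟨?_, ?_⟩, ?_, ?_⟩
  · exact (fromBlocks_posSemidef (hR₁.1.smul hct) (hR₂.1.smul hcs)).submatrix _
  · have : ∀ M : Matrix ((A × B × Fin d₁) ⊕ (A × B × Fin d₂)) _ ℂ,
        (M.submatrix (eqv3 A B d₁ d₂) (eqv3 A B d₁ d₂)).trace = M.trace := fun M =>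
      (eqv3 A B d₁ d₂).sum_comp (fun i => M i i)
    have htr : ∀ (P : Matrix (A × B × Fin d₁) (A × B × Fin d₁) ℂ)
        (Q : Matrix (A × B × Fin d₂) (A × B × Fin d₂) ℂ),
        (fromBlocks P 0 0 Q).trace = P.trace + Q.trace := fun P Q => by
      simp only [trace, Fintype.sum_sum_type, diag_apply, fromBlocks_apply₁₁, fromBlocks_apply₂₂]
    rw [this, htr, trace_smul, trace_smul, hR₁.2, hR₂.2]
    simp only [smul_eq_mul, mul_one]
    exact_mod_cast hts
  · ext ⟨a, b⟩ ⟨a', b'⟩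
    simp only [margAB, Matrix.add_apply, Matrix.smul_apply, smul_eq_mul]
    rw [← finSumFinEquiv.sum_comp, Fintype.sum_sum_type, Finset.mul_sum, Finset.mul_sum]
    congr 1 <;> refine Finset.sum_congr rfl fun e _ => ?_ <;>
      simp [eqv3, eqv, -finSumFinEquiv_apply_left, -finSumFinEquiv_apply_right]
  · unfold condMutualInfo
    have h0 := entropy_block (eqv3 A B d₁ d₂) hR₁.1.1 hR₂.1.1 hR₁.2 hR₂.2 t s ht hs rfl
    have h1 := entropy_block (eqv A d₁ d₂) (margAE_herm hR₁.1.1) (margAE_herm hR₂.1.1)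
      ((margAE_trace _).trans hR₁.2) ((margAE_trace _).trans hR₂.2) t s ht hs
      (M := margAE ((fromBlocks ((t : ℂ) • R₁) 0 0 ((s : ℂ) • R₂)).submatrix (eqv3 A B d₁ d₂)
        (eqv3 A B d₁ d₂))) (by
        ext ⟨a, x⟩ ⟨a', y⟩
        obtain ⟨x, rfl⟩ := finSumFinEquiv.surjective x
        obtain ⟨y, rfl⟩ := finSumFinEquiv.surjective y
        rcases x with x | x <;> rcases y with y | y <;>
        simp [margAE, eqv3, eqv, Finset.mul_sum, -finSumFinEquiv_apply_left,
          -finSumFinEquiv_apply_right])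
    have h2 := entropy_block (eqv B d₁ d₂) (margBE_herm hR₁.1.1) (margBE_herm hR₂.1.1)
      ((margBE_trace _).trans hR₁.2) ((margBE_trace _).trans hR₂.2) t s ht hs
      (M := margBE ((fromBlocks ((t : ℂ) • R₁) 0 0 ((s : ℂ) • R₂)).submatrix (eqv3 A B d₁ d₂)
        (eqv3 A B d₁ d₂))) (by
        ext ⟨a, x⟩ ⟨a', y⟩
        obtain ⟨x, rfl⟩ := finSumFinEquiv.surjective x
        obtain ⟨y, rfl⟩ := finSumFinEquiv.surjective y
        rcases x with x | x <;> rcases y with y | y <;>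
        simp [margBE, eqv3, eqv, Finset.mul_sum, -finSumFinEquiv_apply_left,
          -finSumFinEquiv_apply_right])
    have h3 := entropy_block (finSumFinEquiv (m := d₁) (n := d₂)).symm
      (margE_herm hR₁.1.1) (margE_herm hR₂.1.1)
      ((margE_trace _).trans hR₁.2) ((margE_trace _).trans hR₂.2) t s ht hs
      (M := margE ((fromBlocks ((t : ℂ) • R₁) 0 0 ((s : ℂ) • R₂)).submatrix (eqv3 A B d₁ d₂)
        (eqv3 A B d₁ d₂))) (by
        ext x y
        obtain ⟨x, rfl⟩ := finSumFinEquiv.surjective x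
        obtain ⟨y, rfl⟩ := finSumFinEquiv.surjective y
        rcases x with x | x <;> rcases y with y | y <;>
        simp [margE, eqv3, eqv, Finset.mul_sum, -finSumFinEquiv_apply_left,
          -finSumFinEquiv_apply_right])
    rw [h0, h1, h2, h3]
    ring

theorem valSet_nonempty {A B : Type*} [Fintype A] [Fintype B] {ρ : Matrix (A × B) (A × B) ℂ}
    (hρ : IsState ρ) : (valSet ρ).Nonempty := by
  refine ⟨_, 1, ρ.submatrix (fun x => (x.1, x.2.1)) (fun x => (x.1, x.2.1)),
    ⟨hρ.1.submatrix _, ?_⟩, ?_, rfl⟩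
  · rw [← hρ.2]
    simp [trace, Fintype.sum_prod_type]
  · ext ⟨a, b⟩ ⟨a', b'⟩
    simp [margAB]

/-- Positive definiteness is an open condition among Hermitian matrices. -/
theorem posDef_eventually {n : Type*} [Fintype n] {σ : Matrix n n ℂ} (hσ : σ.PosDef) :
    ∀ᶠ Y in nhds σ, Y.IsHermitian → Y.PosDef := by
  have hK : IsCompact (Metric.sphere (0 : n → ℂ) 1) := isCompact_sphere _ _
  have hcont : Continuous (fun p : Matrix n n ℂ × (n → ℂ) =>
      (star p.2 ⬝ᵥ (p.1 *ᵥ p.2)).re) := by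
    refine Complex.continuous_re.comp ?_
    exact (Continuous.dotProduct (by fun_prop) (Continuous.matrix_mulVec (by fun_prop)
      (by fun_prop)))
  have key := hK.eventually_forall_of_forall_eventually (x₀ := σ)
    (P := fun Y x => 0 < (star x ⬝ᵥ (Y *ᵥ x)).re) (fun x hx => by
      have hx0 : x ≠ 0 := by
        rintro rfl
        simp at hx
      have h1 := hσ.dotProduct_mulVec_pos hx0
      exact (hcont.continuousAt (x := (σ, x))).eventually (lt_mem_nhds (Complex.pos_iff.1 h1).1))
  filter_upwards [key] with Y hY hH
  refine Matrix.PosDef.of_dotProduct_mulVec_pos hH fun x hx => ?_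
  have hn : 0 < ‖x‖ := norm_pos_iff.2 hx
  have h2 := hY (((‖x‖⁻¹ : ℝ) : ℂ) • x) (by simp [norm_smul, hn.ne'])
  have h3 : star (((‖x‖⁻¹ : ℝ) : ℂ) • x) ⬝ᵥ (Y *ᵥ (((‖x‖⁻¹ : ℝ) : ℂ) • x))
      = ((‖x‖⁻¹ * ‖x‖⁻¹ : ℝ) : ℂ) * (star x ⬝ᵥ (Y *ᵥ x)) := by
    rw [mulVec_smul, star_smul, smul_dotProduct, dotProduct_smul]
    simp only [smul_eq_mul, Complex.star_def, Complex.conj_ofReal]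
    push_cast
    ring
  rw [h3, Complex.re_ofReal_mul] at h2
  refine Complex.pos_iff.2 ⟨pos_of_mul_pos_right h2 (by positivity), ?_⟩
  exact (hH.im_star_dotProduct_mulVec_self x).symm

/-- If the infimum is unbounded below at one faithful state, it is at all of them. -/
theorem not_bddBelow_spread {A B : Type*} [Fintype A] [Fintype B]
    {σ₀ σ : Matrix (A × B) (A × B) ℂ} (h₀ : IsState σ₀) (hb : ¬ BddBelow (valSet σ₀))
    (hσ : IsState σ) (hpd : σ.PosDef) : ¬ BddBelow (valSet σ) := by
  have hc : Filter.Tendsto (fun t : ℝ => (σ - (t : ℂ) • σ₀)) (nhdsWithin 0 (Set.Ioi 0)) (nhds σ) := by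
    have : Continuous (fun t : ℝ => (σ - (t : ℂ) • σ₀)) := by fun_prop
    have h2 := this.tendsto 0
    simp only [Complex.ofReal_zero, zero_smul, sub_zero] at h2
    exact h2.mono_left nhdsWithin_le_nhds
  have h1 := hc.eventually (posDef_eventually hpd)
  have h2 : ∀ᶠ t : ℝ in nhdsWithin 0 (Set.Ioi 0), t < 1 :=
    nhdsWithin_le_nhds (gt_mem_nhds one_pos)
  obtain ⟨t, ⟨hp, ht1⟩, ht0⟩ := ((h1.and h2).and self_mem_nhdsWithin).exists
  have ht0 : 0 < t := ht0
  have hs : 0 < 1 - t := by linarith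
  have hps := (hp (hσ.1.1.sub (by
    ext i j; simp [Matrix.conjTranspose_apply, ← h₀.1.1.apply i j]))).posSemidef
  have hsc : ((1 - t : ℝ) : ℂ) ≠ 0 := by exact_mod_cast hs.ne'
  set τ : Matrix (A × B) (A × B) ℂ := (((1 - t)⁻¹ : ℝ) : ℂ) • (σ - (t : ℂ) • σ₀) with hτ
  have hτs : IsState τ := by
    refine ⟨hps.smul (by exact_mod_cast (inv_pos.2 hs).le), ?_⟩
    rw [hτ, trace_smul, trace_sub, trace_smul, hσ.2, h₀.2]
    simp only [smul_eq_mul, mul_one]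
    push_cast at hsc ⊢
    exact inv_mul_cancel₀ hsc
  have hmix : σ = (t : ℂ) • σ₀ + ((1 - t : ℝ) : ℂ) • τ := by
    rw [hτ, smul_smul, ← Complex.ofReal_mul, mul_inv_cancel₀ hs.ne']
    simp
  obtain ⟨y, hy⟩ := valSet_nonempty hτs
  rintro ⟨m, hm⟩
  apply hb
  refine ⟨(m - (1 - t) * y) / t, fun x hx => ?_⟩
  have h4 := valSet_mix hx hy ht0 hs (by ring)
  rw [← hmix] at h4
  have h5 := hm h4
  rw [div_le_iff₀ ht0]
  linarith

/-- Convexity of squashed entanglement. -/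
theorem Esq_convex {A B : Type*} [Fintype A] [Fintype B] {ρ₁ ρ₂ : Matrix (A × B) (A × B) ℂ}
    (h₁ : IsState ρ₁) (h₂ : IsState ρ₂) {t s : ℝ} (ht : 0 < t) (hs : 0 < s)
    (hts : t + s = 1) (hb : BddBelow (valSet ((t : ℂ) • ρ₁ + (s : ℂ) • ρ₂))) :
    Esq ((t : ℂ) • ρ₁ + (s : ℂ) • ρ₂) ≤ t * Esq ρ₁ + s * Esq ρ₂ := by
  change sInf (valSet _) ≤ t * sInf (valSet _) + s * sInf (valSet _)
  refine le_of_forall_pos_le_add fun ε hε => ?_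
  obtain ⟨x, hx, hx'⟩ := Real.lt_sInf_add_pos (valSet_nonempty h₁) hε
  obtain ⟨y, hy, hy'⟩ := Real.lt_sInf_add_pos (valSet_nonempty h₂) hε
  have h3 := csInf_le hb (valSet_mix hx hy ht hs hts)
  have e : t * ε + s * ε = ε := by rw [← add_mul, hts, one_mul]
  nlinarith [mul_lt_mul_of_pos_left hx' ht, mul_lt_mul_of_pos_left hy' hs]

/-- Entries are bounded by the trace norm. -/
theorem entry_le_traceNorm {n : Type*} [Fintype n] {X : Matrix n n ℂ} (h : X.IsHermitian)
    (i j : n) : ‖X i j‖ ≤ traceNorm X := by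
  simp only [traceNorm, dif_pos h]
  have hU : ∀ a b, ‖(h.eigenvectorUnitary : Matrix n n ℂ) a b‖ ≤ 1 := fun a b =>
    entry_norm_bound_of_unitary h.eigenvectorUnitary.2 a b
  conv_lhs => rw [h.spectral_theorem, Unitary.conjStarAlgAut_apply, Matrix.mul_apply]
  refine (norm_sum_le _ _).trans (Finset.sum_le_sum fun k _ => ?_)
  rw [Matrix.mul_diagonal, norm_mul, norm_mul, star_apply, norm_star]
  have h3 : ‖((RCLike.ofReal : ℝ → ℂ) ∘ h.eigenvalues) k‖ = |h.eigenvalues k| := by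
    simp
  rw [h3]
  calc _ ≤ 1 * |h.eigenvalues k| * 1 := by gcongr <;> apply hU
    _ = _ := by ring

/-- Traceless Hermitian matrices. -/
def tracelessHerm (n : Type*) [Fintype n] : Submodule ℝ (Matrix n n ℂ) where
  carrier := {X | X.IsHermitian ∧ X.trace = 0}
  add_mem' := fun {a b} ha hb => ⟨ha.1.add hb.1, by rw [trace_add, ha.2, hb.2, add_zero]⟩
  zero_mem' := ⟨isHermitian_zero, trace_zero _ _⟩
  smul_mem' := fun c x hx => ⟨by
    ext i j; simp [Matrix.conjTranspose_apply, ← hx.1.apply i j], by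
    rw [trace_smul, hx.2, smul_zero]⟩


/-- Squashed entanglement is continuous on the interior of the set of states,
i.e. on the faithful (positive definite) states, with respect to the trace norm. -/
theorem squashedEntanglement_continuous_on_faithful
    {A B : Type*} [Fintype A] [Fintype B]
    (ρ : Matrix (A × B) (A × B) ℂ) (hρ : IsState ρ) (hρpd : ρ.PosDef) :
    ∀ ε > (0 : ℝ), ∃ δ > (0 : ℝ), ∀ σ : Matrix (A × B) (A × B) ℂ,
      IsState σ → σ.PosDef → traceNorm (ρ - σ) < δ → |Esq ρ - Esq σ| < ε := by
  intro ε hε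
  by_cases hb : BddBelow (valSet ρ)
  swap
  · refine ⟨1, one_pos, fun σ hσ hpd _ => ?_⟩
    have h1 : Esq ρ = 0 := Real.sInf_of_not_bddBelow hb
    have h2 : Esq σ = 0 := Real.sInf_of_not_bddBelow (not_bddBelow_spread hρ hb hσ hpd)
    simpa [h1, h2] using hε
  have hall : ∀ σ : Matrix (A × B) (A × B) ℂ, IsState σ → BddBelow (valSet σ) := by
    intro σ hσ
    by_contra h
    exact not_bddBelow_spread hσ h hρ hρpd hb
  letI : NormedAddCommGroup (Matrix (A × B) (A × B) ℂ) := Matrix.normedAddCommGroup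
  letI : NormedSpace ℝ (Matrix (A × B) (A × B) ℂ) := Matrix.normedSpace
  let U : Set (tracelessHerm (A × B)) := {X | (ρ + X.1).PosDef}
  let f : tracelessHerm (A × B) → ℝ := fun X => Esq (ρ + X.1)
  have hst : ∀ X ∈ U, IsState (ρ + X.1) := fun X hX => ⟨Matrix.PosDef.posSemidef hX, by
    rw [trace_add, X.2.2, hρ.2, add_zero]⟩
  have hcomb : ∀ (X Y : tracelessHerm (A × B)) (a b : ℝ), a + b = 1 →
      ρ + (a • X + b • Y).1 = (a : ℂ) • (ρ + X.1) + (b : ℂ) • (ρ + Y.1) := by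
    intro X Y a b hab
    have hab' : (a : ℂ) + b = 1 := by exact_mod_cast hab
    ext i j
    simp only [Submodule.coe_add, Submodule.coe_smul, Matrix.add_apply, Matrix.smul_apply, smul_eq_mul,
      Complex.real_smul]
    linear_combination (-ρ i j) * hab'
  have hUo : IsOpen U := by
    rw [isOpen_iff_mem_nhds]
    intro X hX
    have hc : Continuous (fun Y : tracelessHerm (A × B) => ρ + Y.1) := by fun_prop
    filter_upwards [hc.continuousAt.eventually (posDef_eventually hX)] with Y hY
    exact hY (hρ.1.1.add Y.2.1)
  have hf : ConvexOn ℝ U f := by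
    rw [convexOn_iff_forall_pos]
    have hconv : ∀ X ∈ U, ∀ Y ∈ U, ∀ a b : ℝ, 0 < a → 0 < b → a + b = 1 → a • X + b • Y ∈ U := by
      intro X hX Y hY a b ha hb hab
      change (ρ + (a • X + b • Y).1).PosDef
      rw [hcomb X Y a b hab]
      exact (Matrix.PosDef.smul hX (by exact_mod_cast ha)).add
        (Matrix.PosDef.smul hY (by exact_mod_cast hb))
    refine ⟨convex_iff_forall_pos.2 fun X hX Y hY a b => hconv X hX Y hY a b, ?_⟩
    intro X hX Y hY a b ha hb hab
    have h3 := hst _ (hconv X hX Y hY a b ha hb hab)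
    change Esq (ρ + (a • X + b • Y).1) ≤ a * Esq _ + b * Esq _
    have h4 := hall _ h3
    rw [hcomb X Y a b hab] at h4 ⊢
    exact Esq_convex (hst X hX) (hst Y hY) ha hb hab h4
  have h0 : (0 : tracelessHerm (A × B)) ∈ U := by
    change (ρ + (0 : Matrix (A × B) (A × B) ℂ)).PosDef
    rwa [add_zero]
  have hcont : ContinuousAt f 0 := (hf.continuousOn hUo).continuousAt (hUo.mem_nhds h0)
  obtain ⟨δ, hδ, hδ'⟩ := Metric.continuousAt_iff.1 hcont ε hε
  refine ⟨δ, hδ, fun σ hσ hpd hlt => ?_⟩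
  have hH : (ρ - σ).IsHermitian := hρ.1.1.sub hσ.1.1
  have hX : σ - ρ ∈ tracelessHerm (A × B) := ⟨hσ.1.1.sub hρ.1.1, by
    rw [trace_sub, hσ.2, hρ.2, sub_self]⟩
  have h5 := @hδ' ⟨σ - ρ, hX⟩ (by
    rw [dist_zero_right]
    change ‖σ - ρ‖ < δ
    rw [Matrix.norm_lt_iff hδ]
    intro i j
    rw [← neg_sub, Matrix.neg_apply, norm_neg]
    exact (entry_le_traceNorm hH i j).trans_lt hlt)
  have h6 : f ⟨σ - ρ, hX⟩ = Esq σ := by simp [f]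
  have h7 : f 0 = Esq ρ := by simp [f]
  rw [h6, h7, Real.dist_eq, abs_sub_comm] at h5
  exact h5

end
end

section
/- Fannes-type inequality for the conditional entropy of states classical on B: let ρ^{AB} = ∑_k p_k ρ_k ⊗ |k⟩⟨k| and σ^{AB} = ∑_k q_k σ_k ⊗ |k⟩⟨k| be states on H_A ⊗ H_B, where (|k⟩)_k is a fixed orthonormal basis of H_B, (p_k) and (q_k) are probability distributions, and ρ_k, σ_k are states on H_A. If ‖ρ^{AB} - σ^{AB}‖₁ ≤ ε, then |S(A|B)_ρ - S(A|B)_σ| ≤ η(2ε) + 3ε log₂ d_A, where d_A = dim H_A, S(A|B) = S(AB) - S(B) is the conditional von Neumann entropy, and η(x) = -x log₂ x for x ≤ 1/4 and η(x) = 1/2 otherwise. -/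
open Matrix BigOperators Kronecker
open scoped Classical ComplexOrder

noncomputable section

variable {A B E : Type*} [Fintype A] [Fintype B] [Fintype E]

/-- A state on `A × B` which is classical on `B` with respect to the standard basis:
`∑_k p_k ρ_k ⊗ |k⟩⟨k|`. -/
def classicalOnB {A B : Type*} [DecidableEq B]
    (p : B → ℝ) (ρs : B → Matrix A A ℂ) : Matrix (A × B) (A × B) ℂ :=
  fun x y => if x.2 = y.2 then (p x.2 : ℂ) * ρs x.2 x.1 y.1 else 0

/-- The conditional von Neumann entropy `S(A|B) = S(AB) - S(B)`. -/
def condEntropyA {A B : Type*} [Fintype A] [Fintype B]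
    (ρ : Matrix (A × B) (A × B) ℂ) : ℝ :=
  vonNeumannEntropy ρ - vonNeumannEntropy (ptraceL ρ)


/-! ### Scalar inequalities -/

/-- The entropy gap of two weights. -/
def gapG (a b : ℝ) : ℝ := Real.negMulLog a + Real.negMulLog b - Real.negMulLog (a + b)

lemma negMulLog_tangent {a c : ℝ} (ha : 0 ≤ a) (hc : 0 < c) :
    Real.negMulLog a ≤ -(a * Real.log c) + c - a := by
  rcases ha.eq_or_lt with rfl | ha
  · simp [hc.le]
  · have h := Real.log_le_sub_one_of_pos (div_pos hc ha)
    rw [Real.log_div hc.ne' ha.ne'] at h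
    have h2 := mul_le_mul_of_nonneg_left h ha.le
    have h3 : a * (c / a - 1) = c - a := by field_simp
    rw [h3] at h2
    unfold Real.negMulLog
    nlinarith

lemma gapG_tangent {a b s t : ℝ} (ha : 0 ≤ a) (hb : 0 ≤ b) (hs : 0 < s) (ht : 0 < t) :
    gapG a b ≤ a * (Real.log (s + t) - Real.log s) + b * (Real.log (s + t) - Real.log t) := by
  rcases (add_nonneg ha hb).eq_or_lt with h | h
  · have h1 : a = 0 := by linarith
    have h2 : b = 0 := by linarith
    subst h1 h2
    simp [gapG]
  · have hst : 0 < s + t := by linarith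
    have e1 := negMulLog_tangent (c := (a + b) * s / (s + t)) ha (by positivity)
    have e2 := negMulLog_tangent (c := (a + b) * t / (s + t)) hb (by positivity)
    rw [Real.log_div (by positivity) hst.ne', Real.log_mul h.ne' hs.ne'] at e1
    rw [Real.log_div (by positivity) hst.ne', Real.log_mul h.ne' ht.ne'] at e2
    have e3 : (a + b) * s / (s + t) + (a + b) * t / (s + t) = a + b := by
      field_simp
    unfold gapG
    have e4 : Real.negMulLog (a + b) = -((a + b) * Real.log (a + b)) := by
      unfold Real.negMulLog; ring
    rw [e4]
    nlinarith

lemma gapG_zero_left (b : ℝ) : gapG 0 b = 0 := by simp [gapG]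
lemma gapG_zero_right (b : ℝ) : gapG b 0 = 0 := by simp [gapG]

lemma gapG_sum {ι : Type*} [Fintype ι] (a b : ι → ℝ) (ha : ∀ i, 0 ≤ a i) (hb : ∀ i, 0 ≤ b i) :
    ∑ i, gapG (a i) (b i) ≤ gapG (∑ i, a i) (∑ i, b i) := by
  rcases (Finset.sum_nonneg (fun i (_ : i ∈ Finset.univ) => ha i)).eq_or_lt with h | hs
  · have h0 := (Finset.sum_eq_zero_iff_of_nonneg (fun i _ => ha i)).1 h.symm
    rw [← h, gapG_zero_left, Finset.sum_eq_zero]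
    intro i hi
    rw [h0 i hi, gapG_zero_left]
  rcases (Finset.sum_nonneg (fun i (_ : i ∈ Finset.univ) => hb i)).eq_or_lt with h | ht
  · have h0 := (Finset.sum_eq_zero_iff_of_nonneg (fun i _ => hb i)).1 h.symm
    rw [← h, gapG_zero_right, Finset.sum_eq_zero]
    intro i hi
    rw [h0 i hi, gapG_zero_right]
  refine (Finset.sum_le_sum fun i _ => gapG_tangent (ha i) (hb i) hs ht).trans ?_
  rw [Finset.sum_add_distrib, ← Finset.sum_mul, ← Finset.sum_mul]
  apply le_of_eq
  simp only [gapG, Real.negMulLog]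
  ring

lemma negMulLog_sum_le {ι : Type*} [Fintype ι] (a : ι → ℝ) (ha : ∀ i, 0 ≤ a i) :
    Real.negMulLog (∑ i, a i) ≤ ∑ i, Real.negMulLog (a i) := by
  have : Real.negMulLog (∑ i, a i) = ∑ i, (a i * -Real.log (∑ i, a i)) := by
    rw [← Finset.sum_mul, Real.negMulLog]; ring
  rw [this]
  refine Finset.sum_le_sum fun i _ => ?_
  rcases (ha i).eq_or_lt with h | h
  · simp [← h]
  · have h1 : a i ≤ ∑ i, a i := Finset.single_le_sum (fun i _ => ha i) (Finset.mem_univ i)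
    have := Real.log_le_log h h1
    unfold Real.negMulLog
    nlinarith

lemma sum_negMulLog_le {ι : Type*} [Fintype ι] (a : ι → ℝ) (ha : ∀ i, 0 ≤ a i) :
    ∑ i, Real.negMulLog (a i) ≤
      Real.negMulLog (∑ i, a i) + (∑ i, a i) * Real.log (Fintype.card ι) := by
  rcases (Finset.sum_nonneg (fun i (_ : i ∈ Finset.univ) => ha i)).eq_or_lt with h | hs
  · have h0 := (Finset.sum_eq_zero_iff_of_nonneg (fun i _ => ha i)).1 h.symm
    rw [← h, Finset.sum_eq_zero]
    · simp
    · intro i hi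
      simp [h0 i hi]
  · have hne : Nonempty ι := by
      by_contra hne
      rw [not_nonempty_iff] at hne
      simp at hs
    have hd : (0 : ℝ) < Fintype.card ι := by exact_mod_cast Fintype.card_pos
    refine (Finset.sum_le_sum fun i _ => negMulLog_tangent (ha i) (div_pos hs hd)).trans ?_
    rw [Finset.sum_sub_distrib, Finset.sum_add_distrib, Finset.sum_neg_distrib, ← Finset.sum_mul,
      Real.log_div hs.ne' hd.ne']
    simp only [Finset.sum_const, Finset.card_univ, nsmul_eq_mul, Real.negMulLog]
    apply le_of_eq
    field_simp
    ring

/-- The final scalar estimate. -/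
lemma final_scalar {T ε L : ℝ} (hT : 0 ≤ T) (hTε : T ≤ ε / 2) (hε : ε < 1 / 3)
    (hL : Real.log 2 ≤ L) :
    T * L + gapG 1 T ≤ Real.log 2 * eta (2 * ε) + 3 * ε * L := by
  have l1 := Real.log_two_gt_d9
  have l2 := Real.log_two_lt_d9
  have g1 : gapG 1 T ≤ Real.negMulLog T + (1 + T) * T := by
    have := Real.log_le_sub_one_of_pos (show (0 : ℝ) < 1 + T by linarith)
    simp only [gapG, Real.negMulLog_one]
    have e4 : Real.negMulLog (1 + T) = -((1 + T) * Real.log (1 + T)) := by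
      unfold Real.negMulLog; ring
    rw [e4]
    nlinarith
  have hl4 : Real.log (1 / 4) = -(2 * Real.log 2) := by
    rw [show (1 / 4 : ℝ) = (2 ^ 2)⁻¹ by norm_num, Real.log_inv, Real.log_pow]; norm_num
  have hTL : T * L ≤ ε / 2 * L := mul_le_mul_of_nonneg_right hTε (by linarith)
  have hεL : ε * (69 / 100) ≤ ε * L := mul_le_mul_of_nonneg_left (by linarith) (by linarith)
  have hTT : (1 + T) * T ≤ (7 / 6) * (ε / 2) := by nlinarith
  unfold eta
  split_ifs with h
  · have key : Real.negMulLog T ≤ -(2 * ε * Real.log (2 * ε)) := by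
      rcases (show 0 ≤ ε by linarith).eq_or_lt with h0 | h0
      · have : T = 0 := by linarith
        simp [this, ← h0]
      have h1 := negMulLog_tangent (c := 2 * ε) hT (by linarith)
      have h2 : Real.log (2 * ε) ≤ -1 :=
        (Real.log_le_log (by linarith) h).trans (by rw [hl4]; linarith)
      nlinarith
    have e : Real.log 2 * -(2 * ε * Real.logb 2 (2 * ε)) = -(2 * ε * Real.log (2 * ε)) := by
      unfold Real.logb
      field_simp
    rw [e]
    linarith
  · have h1 := negMulLog_tangent (c := 1 / 4) hT (by norm_num)
    rw [hl4] at h1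
    nlinarith

lemma eta_nonneg {x : ℝ} (hx : 0 ≤ x) : 0 ≤ eta x := by
  unfold eta
  split_ifs with h
  · have : Real.logb 2 x ≤ 0 := Real.logb_nonpos (by norm_num) hx (by linarith)
    nlinarith
  · norm_num

/-! ### Entropy of positive matrices -/

/-- Entropy in nats, for an arbitrary Hermitian matrix. -/
def entN {n : Type*} [Fintype n] (X : Matrix n n ℂ) : ℝ :=
  if h : X.IsHermitian then ∑ i, Real.negMulLog (h.eigenvalues i) else 0

lemma diag_entry {n : Type*} [Fintype n] (W : Matrix n n ℂ) (x : n → ℝ) (j : n) :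
    (Wᴴ * diagonal (fun i => (x i : ℂ)) * W) j j = ((∑ i, x i * ‖W i j‖ ^ 2 : ℝ) : ℂ) := by
  rw [Matrix.mul_apply]
  push_cast
  refine Finset.sum_congr rfl fun i _ => ?_
  rw [Matrix.mul_diagonal, Matrix.conjTranspose_apply, mul_right_comm, ← Complex.conj_mul']
  simp only [Complex.star_def]
  ring

lemma quad_form {n : Type*} [Fintype n] (W : Matrix n n ℂ) (x : n → ℝ) (t : n → ℂ) :
    star t ⬝ᵥ ((Wᴴ * diagonal (fun i => (x i : ℂ)) * W) *ᵥ t)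
      = ((∑ i, x i * ‖(W *ᵥ t) i‖ ^ 2 : ℝ) : ℂ) := by
  rw [← Matrix.mulVec_mulVec, ← Matrix.mulVec_mulVec, Matrix.dotProduct_mulVec,
    ← Matrix.star_mulVec]
  push_cast
  refine Finset.sum_congr rfl fun i _ => ?_
  rw [Matrix.mulVec_diagonal, ← Complex.conj_mul']
  simp only [Complex.star_def, Pi.star_apply]
  ring

lemma row_sum {n : Type*} [Fintype n] {W : Matrix n n ℂ} (h : W * Wᴴ = 1) (i : n) :
    ∑ j, ‖W i j‖ ^ 2 = 1 := by
  have h1 := congrFun (congrFun h i) i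
  rw [Matrix.mul_apply, Matrix.one_apply_eq] at h1
  have : ((∑ j, ‖W i j‖ ^ 2 : ℝ) : ℂ) = 1 := by
    rw [← h1]
    push_cast
    refine Finset.sum_congr rfl fun j _ => ?_
    rw [← Complex.mul_conj', Matrix.conjTranspose_apply, Complex.star_def]
  exact_mod_cast this

lemma col_sum {n : Type*} [Fintype n] {W : Matrix n n ℂ} (h : Wᴴ * W = 1) (j : n) :
    ∑ i, ‖W i j‖ ^ 2 = 1 := by
  have := row_sum (W := Wᴴ) (by simpa using h) j
  simpa [Matrix.conjTranspose_apply] using this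

lemma exists_spec {n : Type*} [Fintype n] {X : Matrix n n ℂ} (hX : X.IsHermitian) :
    ∃ U : Matrix n n ℂ, U * Uᴴ = 1 ∧ Uᴴ * U = 1 ∧
      X = U * diagonal (fun i => (hX.eigenvalues i : ℂ)) * Uᴴ := by
  refine ⟨(hX.eigenvectorUnitary : Matrix n n ℂ), ?_, ?_, ?_⟩
  · exact Unitary.coe_mul_star_self hX.eigenvectorUnitary
  · exact Unitary.coe_star_mul_self hX.eigenvectorUnitary
  · have := hX.spectral_theorem
    rw [Unitary.conjStarAlgAut_apply] at this
    exact this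

lemma trace_re_eq {n : Type*} [Fintype n] {X : Matrix n n ℂ} (hX : X.IsHermitian) :
    X.trace.re = ∑ i, hX.eigenvalues i := by
  rw [hX.trace_eq_sum_eigenvalues]
  simp

lemma add_setup {n : Type*} [Fintype n] {X Y : Matrix n n ℂ} (hX : X.PosSemidef)
    (hY : Y.PosSemidef) :
    ∃ (x y z : n → ℝ) (W W' : Matrix n n ℂ), (∀ i, 0 ≤ x i) ∧ (∀ i, 0 ≤ y i) ∧ (∀ i, 0 ≤ z i) ∧
      W * Wᴴ = 1 ∧ Wᴴ * W = 1 ∧ W' * W'ᴴ = 1 ∧ W'ᴴ * W' = 1 ∧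
      diagonal (fun i => (z i : ℂ)) =
        Wᴴ * diagonal (fun i => (x i : ℂ)) * W + W'ᴴ * diagonal (fun i => (y i : ℂ)) * W' ∧
      entN X = ∑ i, Real.negMulLog (x i) ∧ entN Y = ∑ i, Real.negMulLog (y i) ∧
      entN (X + Y) = ∑ i, Real.negMulLog (z i) ∧
      X.trace.re = ∑ i, x i ∧ Y.trace.re = ∑ i, y i := by
  have hZ := hX.add hY
  obtain ⟨U, hU1, hU2, hU⟩ := exists_spec hX.1
  obtain ⟨U', hU'1, hU'2, hU'⟩ := exists_spec hY.1
  obtain ⟨V, hV1, hV2, hV⟩ := exists_spec hZ.1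
  have aux : ∀ {P Q : Matrix n n ℂ}, P * Pᴴ = 1 → Pᴴ * P = 1 → Q * Qᴴ = 1 → Qᴴ * Q = 1 →
      (Pᴴ * Q) * (Pᴴ * Q)ᴴ = 1 ∧ (Pᴴ * Q)ᴴ * (Pᴴ * Q) = 1 := by
    intro P Q h1 h2 h3 h4
    rw [Matrix.conjTranspose_mul, Matrix.conjTranspose_conjTranspose]
    constructor
    · rw [Matrix.mul_assoc, ← Matrix.mul_assoc Q, h3, Matrix.one_mul, h2]
    · rw [Matrix.mul_assoc, ← Matrix.mul_assoc P, h1, Matrix.one_mul, h4]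
  refine ⟨hX.1.eigenvalues, hY.1.eigenvalues, hZ.1.eigenvalues, Uᴴ * V, U'ᴴ * V,
    hX.eigenvalues_nonneg, hY.eigenvalues_nonneg, hZ.eigenvalues_nonneg,
    (aux hU1 hU2 hV1 hV2).1, (aux hU1 hU2 hV1 hV2).2, (aux hU'1 hU'2 hV1 hV2).1,
    (aux hU'1 hU'2 hV1 hV2).2, ?_, ?_, ?_, ?_, trace_re_eq hX.1, trace_re_eq hY.1⟩
  · have h1 : diagonal (fun i => (hZ.1.eigenvalues i : ℂ)) = Vᴴ * (X + Y) * V := by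
      conv_rhs => rw [hV]
      simp only [Matrix.mul_assoc, hV2, Matrix.mul_one]
      rw [← Matrix.mul_assoc, hV2, Matrix.one_mul]
    rw [h1, Matrix.mul_add, Matrix.add_mul]
    congr 1
    · conv_lhs => rw [hU]
      simp only [Matrix.mul_assoc, Matrix.conjTranspose_mul, Matrix.conjTranspose_conjTranspose]
    · conv_lhs => rw [hU']
      simp only [Matrix.mul_assoc, Matrix.conjTranspose_mul, Matrix.conjTranspose_conjTranspose]
  · rw [entN, dif_pos hX.1]
  · rw [entN, dif_pos hY.1]
  · rw [entN, dif_pos hZ.1]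

lemma peierls {n : Type*} [Fintype n] {W : Matrix n n ℂ} {x : n → ℝ} (hx : ∀ i, 0 ≤ x i)
    (h1 : W * Wᴴ = 1) (h2 : Wᴴ * W = 1) :
    ∑ i, Real.negMulLog (x i) ≤ ∑ j, Real.negMulLog (∑ i, x i * ‖W i j‖ ^ 2) := by
  have key : ∀ j, ∑ i, ‖W i j‖ ^ 2 * Real.negMulLog (x i)
      ≤ Real.negMulLog (∑ i, x i * ‖W i j‖ ^ 2) := by
    intro j
    have := Real.concaveOn_negMulLog.le_map_sum (t := Finset.univ) (w := fun i => ‖W i j‖ ^ 2)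
      (p := x) (fun i _ => by positivity) (col_sum h2 j) (fun i _ => hx i)
    simpa [mul_comm] using this
  refine le_trans (le_of_eq ?_) (Finset.sum_le_sum fun j _ => key j)
  rw [Finset.sum_comm]
  refine Finset.sum_congr rfl fun i _ => ?_
  rw [← Finset.sum_mul, row_sum h1, one_mul]

lemma sum_diag {n : Type*} [Fintype n] {W : Matrix n n ℂ} {x : n → ℝ} (h1 : W * Wᴴ = 1) :
    ∑ j, ∑ i, x i * ‖W i j‖ ^ 2 = ∑ i, x i := by
  rw [Finset.sum_comm]
  refine Finset.sum_congr rfl fun i _ => ?_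
  rw [← Finset.mul_sum, row_sum h1, mul_one]

/-- Concavity of the (homogeneous) entropy. -/
lemma entN_superadd {n : Type*} [Fintype n] {X Y : Matrix n n ℂ} (hX : X.PosSemidef)
    (hY : Y.PosSemidef) :
    entN X + entN Y ≤ entN (X + Y) + gapG X.trace.re Y.trace.re := by
  obtain ⟨x, y, z, W, W', hx, hy, hz, h1, h2, h3, h4, hd, eX, eY, eZ, tX, tY⟩ := add_setup hX hY
  rw [eX, eY, eZ, tX, tY]
  have hzj : ∀ j, z j = (∑ i, x i * ‖W i j‖ ^ 2) + ∑ i, y i * ‖W' i j‖ ^ 2 := by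
    intro j
    have := congrFun (congrFun hd j) j
    rw [Matrix.add_apply, diag_entry, diag_entry, Matrix.diagonal_apply_eq] at this
    exact_mod_cast this
  have g := gapG_sum (fun j => ∑ i, x i * ‖W i j‖ ^ 2) (fun j => ∑ i, y i * ‖W' i j‖ ^ 2)
    (fun j => Finset.sum_nonneg fun i _ => mul_nonneg (hx i) (by positivity))
    (fun j => Finset.sum_nonneg fun i _ => mul_nonneg (hy i) (by positivity))
  rw [sum_diag h1, sum_diag h3] at g
  have p1 := peierls hx h1 h2
  have p2 := peierls hy h3 h4
  simp only [gapG, Finset.sum_sub_distrib, Finset.sum_add_distrib, ← hzj] at g ⊢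
  linarith

lemma log_mono {n : Type*} [Fintype n] {W : Matrix n n ℂ} {x z : n → ℝ} (hx : ∀ i, 0 ≤ x i)
    (hz : ∀ i, 0 ≤ z i) (h1 : W * Wᴴ = 1)
    (hle : ∀ t : n → ℂ, ∑ i, x i * ‖(W *ᵥ t) i‖ ^ 2 ≤ ∑ j, z j * ‖t j‖ ^ 2) :
    ∑ j, (∑ i, x i * ‖W i j‖ ^ 2) * (-Real.log (z j)) ≤ ∑ i, Real.negMulLog (x i) := by
  simp_rw [Finset.sum_mul]
  rw [Finset.sum_comm]
  refine Finset.sum_le_sum fun i _ => ?_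
  rcases (hx i).eq_or_lt with h0 | hpos
  · simp [← h0]
  -- the weights vanish where `z` does
  have hzero : ∀ j, z j = 0 → W i j = 0 := by
    intro j hj
    have h := hle (Pi.single j 1)
    have e : ∑ k, z k * ‖(Pi.single j (1 : ℂ) : n → ℂ) k‖ ^ 2 = 0 := by
      refine Finset.sum_eq_zero fun k _ => ?_
      by_cases hk : k = j
      · subst hk; simp [hj]
      · simp [hk]
    rw [e] at h
    have h2 := (Finset.single_le_sum
      (f := fun i => x i * ‖(W *ᵥ Pi.single j (1 : ℂ)) i‖ ^ 2)
      (fun k _ => mul_nonneg (hx k) (by positivity)) (Finset.mem_univ i)).trans h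
    simp only [Matrix.mulVec_single_one, Matrix.col_apply] at h2
    by_contra hne
    have : 0 < ‖W i j‖ := norm_pos_iff.2 hne
    have : 0 < x i * ‖W i j‖ ^ 2 := by positivity
    linarith
  set s : ℝ := ∑ j, ‖W i j‖ ^ 2 / z j with hs
  have hs0 : 0 ≤ s := Finset.sum_nonneg fun j _ => div_nonneg (by positivity) (hz j)
  have hxs : x i * s ≤ 1 := by
    have h := hle (fun j => star (W i j) / (z j : ℂ))
    have e1 : ∑ j, z j * ‖star (W i j) / (z j : ℂ)‖ ^ 2 = s := by
      refine Finset.sum_congr rfl fun j _ => ?_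
      rw [norm_div, norm_star, Complex.norm_real, div_pow, Real.norm_eq_abs, sq_abs]
      by_cases hj : z j = 0
      · simp [hj]
      · field_simp
    have e2 : (W *ᵥ fun j => star (W i j) / (z j : ℂ)) i = (s : ℂ) := by
      rw [hs, Matrix.mulVec, dotProduct]
      push_cast
      refine Finset.sum_congr rfl fun j _ => ?_
      rw [← Complex.mul_conj', Complex.star_def]
      ring
    rw [e1] at h
    have h2 := (Finset.single_le_sum
      (f := fun k => x k * ‖(W *ᵥ fun j => star (W i j) / (z j : ℂ)) k‖ ^ 2)
      (fun k _ => mul_nonneg (hx k) (by positivity)) (Finset.mem_univ i)).trans h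
    simp only [e2, Complex.norm_real, Real.norm_eq_abs, sq_abs] at h2
    rcases hs0.eq_or_lt with h0 | h0
    · rw [← h0]; simp
    · by_contra hc
      push Not at hc
      nlinarith
  have hterm : ∀ j, x i * ‖W i j‖ ^ 2 * (-Real.log (z j)) ≤
      ‖W i j‖ ^ 2 * Real.negMulLog (x i) + x i * (x i * (‖W i j‖ ^ 2 / z j) - ‖W i j‖ ^ 2) := by
    intro j
    rcases (hz j).eq_or_lt with h0 | h0
    · rw [hzero j h0.symm]; simp
    · have hl := Real.log_le_sub_one_of_pos (div_pos hpos h0)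
      rw [Real.log_div hpos.ne' h0.ne'] at hl
      have := mul_le_mul_of_nonneg_left hl (show 0 ≤ x i * ‖W i j‖ ^ 2 by positivity)
      unfold Real.negMulLog
      have e : x i * (x i * (‖W i j‖ ^ 2 / z j) - ‖W i j‖ ^ 2)
        = x i * ‖W i j‖ ^ 2 * (x i / z j - 1) := by ring
      rw [e]
      linarith
  refine (Finset.sum_le_sum fun j _ => hterm j).trans ?_
  rw [Finset.sum_add_distrib, ← Finset.sum_mul, row_sum h1, ← Finset.mul_sum,
    Finset.sum_sub_distrib, ← Finset.mul_sum, ← hs, row_sum h1]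
  nlinarith

/-- Subadditivity of the unnormalised entropy. -/
lemma entN_subadd {n : Type*} [Fintype n] {X Y : Matrix n n ℂ} (hX : X.PosSemidef)
    (hY : Y.PosSemidef) : entN (X + Y) ≤ entN X + entN Y := by
  obtain ⟨x, y, z, W, W', hx, hy, hz, h1, h2, h3, h4, hd, eX, eY, eZ, tX, tY⟩ := add_setup hX hY
  rw [eX, eY, eZ]
  have hzj : ∀ j, z j = (∑ i, x i * ‖W i j‖ ^ 2) + ∑ i, y i * ‖W' i j‖ ^ 2 := by
    intro j
    have := congrFun (congrFun hd j) j
    rw [Matrix.add_apply, diag_entry, diag_entry, Matrix.diagonal_apply_eq] at this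
    exact_mod_cast this
  have hq : ∀ t : n → ℂ, ∑ j, z j * ‖t j‖ ^ 2 =
      ∑ i, x i * ‖(W *ᵥ t) i‖ ^ 2 + ∑ i, y i * ‖(W' *ᵥ t) i‖ ^ 2 := by
    intro t
    have h0 := quad_form (1 : Matrix n n ℂ) z t
    rw [Matrix.conjTranspose_one, Matrix.one_mul, Matrix.mul_one, hd, Matrix.add_mulVec,
      dotProduct_add, quad_form, quad_form, Matrix.one_mulVec] at h0
    exact_mod_cast h0.symm
  have m1 := log_mono hx hz h1 (fun t => by
    rw [hq t]
    exact le_add_of_nonneg_right (Finset.sum_nonneg fun i _ => mul_nonneg (hy i) (by positivity)))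
  have m2 := log_mono hy hz h3 (fun t => by
    rw [hq t]
    exact le_add_of_nonneg_left (Finset.sum_nonneg fun i _ => mul_nonneg (hx i) (by positivity)))
  refine le_trans (le_of_eq ?_) (add_le_add m1 m2)
  rw [← Finset.sum_add_distrib]
  refine Finset.sum_congr rfl fun j _ => ?_
  rw [← add_mul, ← hzj, Real.negMulLog]
  ring

lemma entN_ge {n : Type*} [Fintype n] {X : Matrix n n ℂ} (hX : X.PosSemidef) :
    Real.negMulLog X.trace.re ≤ entN X := by
  rw [entN, dif_pos hX.1, trace_re_eq hX.1]
  exact negMulLog_sum_le _ hX.eigenvalues_nonneg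

lemma entN_le {n : Type*} [Fintype n] {X : Matrix n n ℂ} (hX : X.PosSemidef) :
    entN X ≤ Real.negMulLog X.trace.re + X.trace.re * Real.log (Fintype.card n) := by
  rw [entN, dif_pos hX.1, trace_re_eq hX.1]
  exact sum_negMulLog_le _ hX.eigenvalues_nonneg

lemma trace_re_nonneg {n : Type*} [Fintype n] {X : Matrix n n ℂ} (hX : X.PosSemidef) :
    0 ≤ X.trace.re := by
  rw [trace_re_eq hX.1]
  exact Finset.sum_nonneg fun i _ => hX.eigenvalues_nonneg i

/-- Jordan decomposition of a Hermitian matrix. -/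
lemma exists_jordan {n : Type*} [Fintype n] {X : Matrix n n ℂ} (hX : X.IsHermitian) :
    ∃ P N : Matrix n n ℂ, P.PosSemidef ∧ N.PosSemidef ∧ X = P - N ∧
      P.trace.re + N.trace.re = traceNorm X := by
  obtain ⟨U, hU1, hU2, hU⟩ := exists_spec hX
  have tr : ∀ d : n → ℝ, (U * diagonal (fun i => (d i : ℂ)) * Uᴴ).trace.re = ∑ i, d i := by
    intro d
    rw [Matrix.trace_mul_comm, ← Matrix.mul_assoc, hU2, Matrix.one_mul, Matrix.trace_diagonal]
    simp
  have ps : ∀ d : n → ℝ, (∀ i, 0 ≤ d i) →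
      (U * diagonal (fun i => (d i : ℂ)) * Uᴴ).PosSemidef := by
    intro d hd
    refine Matrix.PosSemidef.mul_mul_conjTranspose_same (Matrix.PosSemidef.diagonal ?_) U
    intro i
    simpa using hd i
  refine ⟨_, _, ps (fun i => max (hX.eigenvalues i) 0) (fun i => le_max_right _ _),
    ps (fun i => max (-hX.eigenvalues i) 0) (fun i => le_max_right _ _), ?_, ?_⟩
  · rw [← Matrix.sub_mul, ← Matrix.mul_sub, Matrix.diagonal_sub]
    conv_lhs => rw [hU]
    congr 3
    funext i
    rw [← Complex.ofReal_sub]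
    congr 1
    rcases le_total 0 (hX.eigenvalues i) with h | h
    · rw [max_eq_left h, max_eq_right (by linarith)]; ring
    · rw [max_eq_right h, max_eq_left (by linarith)]; ring
  · rw [tr, tr, ← Finset.sum_add_distrib, traceNorm, dif_pos hX]
    refine Finset.sum_congr rfl fun i _ => ?_
    rcases le_total 0 (hX.eigenvalues i) with h | h
    · rw [max_eq_left h, max_eq_right (by linarith), abs_of_nonneg h]; ring
    · rw [max_eq_right h, max_eq_left (by linarith), abs_of_nonpos h]; ring

/-! ### Block-diagonal matrices -/

lemma eig_sum {n ι : Type*} [Fintype n] [DecidableEq n] [Fintype ι] {X : Matrix n n ℂ} (hX : X.IsHermitian)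
    (d : ι → ℝ) (h : X.charpoly = ∏ i, (Polynomial.X - Polynomial.C (d i : ℂ))) (f : ℝ → ℝ) :
    ∑ i, f (hX.eigenvalues i) = ∑ i, f (d i) := by
  have h1 := hX.roots_charpoly_eq_eigenvalues
  rw [h, Polynomial.roots_prod _ _ (Finset.prod_ne_zero_iff.2 fun i _ =>
    Polynomial.X_sub_C_ne_zero _)] at h1
  simp only [Polynomial.roots_X_sub_C, Multiset.bind_singleton] at h1
  have h2 := congrArg (fun s => (Multiset.map (fun c : ℂ => f c.re) s).sum) h1
  simp only [Multiset.map_map] at h2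
  exact h2.symm

lemma charpoly_blockDiagonal' {n o : Type*} [Fintype n] [Fintype o] [DecidableEq o]
    [DecidableEq (n × o)] (M : o → Matrix n n ℂ) :
    (blockDiagonal M).charpoly = ∏ k, (M k).charpoly := by
  have : (blockDiagonal M).charmatrix = blockDiagonal (fun k => (M k).charmatrix) := by
    ext ⟨i, k⟩ ⟨j, l⟩
    rw [blockDiagonal_apply, charmatrix_apply, blockDiagonal_apply]
    by_cases hkl : k = l
    · subst hkl
      by_cases hij : i = j
      · subst hij; simp
      · simp [hij]
    · simp [hkl]
  have e : (blockDiagonal M).charpoly = ((blockDiagonal M).charmatrix).det := rfl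
  rw [e, this]
  have := det_blockDiagonal (fun k => (M k).charmatrix)
  refine Eq.trans ?_ this
  congr!

lemma eig_sum_block {n o : Type*} [Fintype n] [Fintype o] [DecidableEq o] [DecidableEq (n × o)]
    {M : o → Matrix n n ℂ} (hM : ∀ k, (M k).IsHermitian) (h : (blockDiagonal M).IsHermitian)
    (f : ℝ → ℝ) :
    ∑ i, f (h.eigenvalues i) = ∑ k, ∑ i, f ((hM k).eigenvalues i) := by
  rw [eig_sum h (fun x : o × n => (hM x.1).eigenvalues x.2) _ f, Fintype.sum_prod_type]
  rw [charpoly_blockDiagonal', Fintype.prod_prod_type]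
  refine Finset.prod_congr rfl fun k _ => ?_
  exact (hM k).charpoly_eq

lemma herm_block {n o : Type*} [Fintype n] [Fintype o] [DecidableEq o]
    {M : o → Matrix n n ℂ} (hM : ∀ k, (M k).IsHermitian) : (blockDiagonal M).IsHermitian := by
  unfold Matrix.IsHermitian
  rw [blockDiagonal_conjTranspose]
  congr 1
  funext k
  exact hM k

lemma vonNeumann_eq {n : Type*} [Fintype n] (X : Matrix n n ℂ) :
    vonNeumannEntropy X = entN X / Real.log 2 := by
  unfold vonNeumannEntropy entN
  split_ifs with h
  · rw [Finset.sum_div]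
    refine Finset.sum_congr rfl fun i _ => ?_
    rw [Real.negMulLog, Real.logb]
    ring
  · simp

lemma entN_block {n o : Type*} [Fintype n] [Fintype o] [DecidableEq o]
    {M : o → Matrix n n ℂ} (hM : ∀ k, (M k).IsHermitian) :
    entN (blockDiagonal M) = ∑ k, entN (M k) := by
  rw [entN, dif_pos (herm_block hM)]
  refine (@eig_sum_block n o _ _ _ (fun a b => Classical.propDecidable (a = b)) M hM (herm_block hM)
    Real.negMulLog).trans ?_
  refine Finset.sum_congr rfl fun k _ => ?_
  rw [entN, dif_pos (hM k)]

lemma traceNorm_block {n o : Type*} [Fintype n] [Fintype o] [DecidableEq o]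
    {M : o → Matrix n n ℂ} (hM : ∀ k, (M k).IsHermitian) :
    traceNorm (blockDiagonal M) = ∑ k, traceNorm (M k) := by
  rw [traceNorm, dif_pos (herm_block hM)]
  refine (@eig_sum_block n o _ _ _ (fun a b => Classical.propDecidable (a = b)) M hM (herm_block hM)
    (fun x => |x|)).trans ?_
  refine Finset.sum_congr rfl fun k _ => ?_
  rw [traceNorm, dif_pos (hM k)]

lemma classicalOnB_eq {n o : Type*} [DecidableEq o] (p : o → ℝ) (ρs : o → Matrix n n ℂ) :
    classicalOnB p ρs = blockDiagonal (fun k => (p k : ℂ) • ρs k) := by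
  ext ⟨i, k⟩ ⟨j, l⟩
  simp [classicalOnB, blockDiagonal_apply]

lemma ptraceL_classical {n o : Type*} [Fintype n] [Fintype o] [DecidableEq o] (p : o → ℝ)
    (ρs : o → Matrix n n ℂ) (h : ∀ k, (ρs k).trace = 1) :
    ptraceL (classicalOnB p ρs) = diagonal (fun k => (p k : ℂ)) := by
  ext i j
  by_cases hij : i = j
  · subst hij
    have := h i
    rw [Matrix.trace] at this
    simp only [ptraceL, classicalOnB, if_true, Matrix.diagonal_apply_eq, ← Finset.mul_sum]
    simp only [Matrix.diag_apply] at this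
    rw [this, mul_one]
  · simp [ptraceL, classicalOnB, hij]

lemma entN_diagonal {o : Type*} [Fintype o] [DecidableEq o] (p : o → ℝ) :
    entN (diagonal (fun k => (p k : ℂ))) = ∑ k, Real.negMulLog (p k) := by
  have h : (diagonal (fun k => (p k : ℂ))).IsHermitian := by
    rw [Matrix.isHermitian_diagonal_iff]
    intro k
    simp [isSelfAdjoint_iff]
  rw [entN, dif_pos h]
  refine eig_sum h p ?_ _
  rw [← Matrix.charpoly_diagonal]

/-- Unnormalised conditional entropy in nats of a block family. -/
def condN {n o : Type*} [Fintype n] [Fintype o] (X : o → Matrix n n ℂ) : ℝ :=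
  ∑ k, (entN (X k) - Real.negMulLog (X k).trace.re)

lemma condEntropyA_classical {n o : Type*} [Fintype n] [Fintype o] [DecidableEq o] (p : o → ℝ)
    (ρs : o → Matrix n n ℂ) (h : ∀ k, IsState (ρs k)) :
    condEntropyA (classicalOnB p ρs) = condN (fun k => (p k : ℂ) • ρs k) / Real.log 2 := by
  rw [condEntropyA, ptraceL_classical p ρs (fun k => (h k).2), vonNeumann_eq, vonNeumann_eq,
    entN_diagonal, classicalOnB_eq, entN_block, ← sub_div, condN, Finset.sum_sub_distrib]
  · congr 3
    funext k
    simp [Matrix.trace_smul, (h k).2]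
  · intro k
    have := (h k).1.1
    unfold Matrix.IsHermitian at this ⊢
    rw [Matrix.conjTranspose_smul, this]
    simp

lemma condN_nonneg {n o : Type*} [Fintype n] [Fintype o] {X : o → Matrix n n ℂ}
    (hX : ∀ k, (X k).PosSemidef) : 0 ≤ condN X :=
  Finset.sum_nonneg fun k _ => sub_nonneg.2 (entN_ge (hX k))

lemma condN_le {n o : Type*} [Fintype n] [Fintype o] {X : o → Matrix n n ℂ}
    (hX : ∀ k, (X k).PosSemidef) :
    condN X ≤ (∑ k, (X k).trace.re) * Real.log (Fintype.card n) := by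
  rw [Finset.sum_mul]
  refine Finset.sum_le_sum fun k _ => ?_
  have := entN_le (hX k)
  linarith

lemma condN_half {n o : Type*} [Fintype n] [Fintype o] {X Y P N : o → Matrix n n ℂ}
    (hX : ∀ k, (X k).PosSemidef) (hY : ∀ k, (Y k).PosSemidef)
    (hP : ∀ k, (P k).PosSemidef) (hN : ∀ k, (N k).PosSemidef)
    (h : ∀ k, X k + N k = Y k + P k) :
    condN X - condN Y ≤ (∑ k, (P k).trace.re) * Real.log (Fintype.card n)
      + gapG (∑ k, (Y k).trace.re) (∑ k, (P k).trace.re) := by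
  have h1 : condN X + condN N ≤ condN (fun k => X k + N k) := by
    unfold condN
    rw [← Finset.sum_add_distrib]
    refine Finset.sum_le_sum fun k _ => ?_
    have := entN_superadd (hX k) (hN k)
    rw [Matrix.trace_add, Complex.add_re]
    unfold gapG at this
    linarith
  have h2 : condN (fun k => Y k + P k) ≤ condN Y + condN P +
      ∑ k, gapG (Y k).trace.re (P k).trace.re := by
    unfold condN
    rw [← Finset.sum_add_distrib, ← Finset.sum_add_distrib]
    refine Finset.sum_le_sum fun k _ => ?_
    have := entN_subadd (hY k) (hP k)
    rw [Matrix.trace_add, Complex.add_re]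
    unfold gapG
    linarith
  have h3 := gapG_sum (fun k => (Y k).trace.re) (fun k => (P k).trace.re)
    (fun k => trace_re_nonneg (hY k)) (fun k => trace_re_nonneg (hP k))
  have h4 := condN_nonneg hN
  have h5 := condN_le hP
  simp only [h] at h1
  linarith

/-- Fannes-type inequality for the conditional entropy of states classical
on `B`: if `‖ρ^{AB} - σ^{AB}‖₁ ≤ ε` then
`|S(A|B)_ρ - S(A|B)_σ| ≤ η(2ε) + 3 ε log₂ d_A`. -/
theorem condEntropy_fannes_classicalOnB
    {A B : Type*} [Fintype A] [Fintype B] [DecidableEq B]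
    (p q : B → ℝ) (ρs σs : B → Matrix A A ℂ)
    (hp : ∀ k, 0 ≤ p k) (hp1 : (∑ k, p k) = 1)
    (hq : ∀ k, 0 ≤ q k) (hq1 : (∑ k, q k) = 1)
    (hρs : ∀ k, IsState (ρs k)) (hσs : ∀ k, IsState (σs k))
    (ε : ℝ) (hε : traceNorm (classicalOnB p ρs - classicalOnB q σs) ≤ ε) :
    |condEntropyA (classicalOnB p ρs) - condEntropyA (classicalOnB q σs)|
      ≤ eta (2 * ε) + 3 * ε * Real.logb 2 (Fintype.card A) := by
  set X : B → Matrix A A ℂ := fun k => (p k : ℂ) • ρs k with hXdef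
  set Y : B → Matrix A A ℂ := fun k => (q k : ℂ) • σs k with hYdef
  have hX : ∀ k, (X k).PosSemidef := fun k => (hρs k).1.smul (by exact_mod_cast hp k)
  have hY : ∀ k, (Y k).PosSemidef := fun k => (hσs k).1.smul (by exact_mod_cast hq k)
  have tX : ∑ k, (X k).trace.re = 1 := by
    rw [← hp1]
    refine Finset.sum_congr rfl fun k _ => ?_
    simp [hXdef, Matrix.trace_smul, (hρs k).2]
  have tY : ∑ k, (Y k).trace.re = 1 := by
    rw [← hq1]
    refine Finset.sum_congr rfl fun k _ => ?_
    simp [hYdef, Matrix.trace_smul, (hσs k).2]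
  have hH : ∀ k, ((X - Y) k).IsHermitian := fun k => (hX k).1.sub (hY k).1
  rw [classicalOnB_eq, classicalOnB_eq, ← blockDiagonal_sub, traceNorm_block hH] at hε
  choose P N hP hN hPN hT using fun k => exists_jordan (hH k)
  have hXY : ∀ k, X k + N k = Y k + P k := by
    intro k
    have := hPN k
    rw [Pi.sub_apply, sub_eq_sub_iff_add_eq_add] at this
    rw [this, add_comm]
  set T : ℝ := ∑ k, (P k).trace.re with hTdef
  have hTN : ∑ k, (N k).trace.re = T := by
    have : ∑ k, ((X k).trace.re + (N k).trace.re) = ∑ k, ((Y k).trace.re + (P k).trace.re) := by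
      refine Finset.sum_congr rfl fun k _ => ?_
      rw [← Complex.add_re, ← Matrix.trace_add, hXY k, Matrix.trace_add, Complex.add_re]
    rw [Finset.sum_add_distrib, Finset.sum_add_distrib, tX, tY] at this
    linarith
  have hT0 : 0 ≤ T := Finset.sum_nonneg fun k _ => trace_re_nonneg (hP k)
  have hTε : T ≤ ε / 2 := by
    simp only [← hT, Finset.sum_add_distrib, hTN] at hε
    linarith
  have a1 := condN_half hX hY hP hN hXY
  have a2 := condN_half hY hX hN hP (fun k => (hXY k).symm)
  rw [tY] at a1
  rw [tX, hTN] at a2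
  have x0 := condN_nonneg hX
  have y0 := condN_nonneg hY
  have x1 := condN_le hX
  have y1 := condN_le hY
  rw [tX, one_mul] at x1
  rw [tY, one_mul] at y1
  have l2 : 0 < Real.log 2 := Real.log_pos (by norm_num)
  have et := eta_nonneg (x := 2 * ε) (by linarith)
  set L : ℝ := Real.log (Fintype.card A) with hL
  have hL0 : 0 ≤ L := Real.log_natCast_nonneg _
  rw [condEntropyA_classical p ρs hρs, condEntropyA_classical q σs hσs, ← sub_div, abs_div,
    abs_of_pos l2, div_le_iff₀ l2, Real.logb, ← hL]
  have e : (eta (2 * ε) + 3 * ε * (L / Real.log 2)) * Real.log 2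
      = Real.log 2 * eta (2 * ε) + 3 * ε * L := by
    field_simp
  rw [e]
  have et' : 0 ≤ Real.log 2 * eta (2 * ε) := mul_nonneg l2.le et
  by_cases hbig : 1 / 3 ≤ ε
  · have : L ≤ 3 * ε * L := by nlinarith
    rw [abs_le]
    constructor <;> linarith
  push Not at hbig
  by_cases hcard : Fintype.card A ≤ 1
  · have hLz : L = 0 := by
      rw [hL]
      interval_cases Fintype.card A <;> simp
    rw [hLz] at x1 y1 ⊢
    rw [abs_le]
    constructor <;> linarith
  push Not at hcard
  have hL2 : Real.log 2 ≤ L := Real.log_le_log (by norm_num) (by exact_mod_cast hcard)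
  have fin := final_scalar hT0 hTε hbig hL2
  rw [abs_le]
  constructor <;> linarith

end
end

section
/- Fannes-type inequality for classical conditional entropy: let P and Q be probability distributions on a finite product set X × Y with ∑_{x,y} |P(x,y) - Q(x,y)| ≤ ε. Then |H(X|Y)_P - H(X|Y)_Q| ≤ η(2ε) + 3ε log₂ |X|, where H(X|Y) = H(XY) - H(Y) is the conditional Shannon entropy and η(t) = -t log₂ t for t ≤ 1/4 and η(t) = 1/2 otherwise. -/
open Matrix BigOperators Kronecker
open scoped Classical ComplexOrder

noncomputable section

variable {A B E : Type*} [Fintype A] [Fintype B] [Fintype E]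

/-- Shannon entropy (base 2) of a probability distribution on a finite set,
with the convention `0 log₂ 0 = 0`. -/
def shannonEntropy {S : Type*} [Fintype S] (P : S → ℝ) : ℝ :=
  ∑ s, -(P s * Real.logb 2 (P s))

lemma fan_term (a b c : ℝ) (ha : 0 ≤ a) (hb : 0 ≤ b) (h : b = 0 → a = 0) (hc : 0 < c) :
    a * (Real.log b - Real.log a) ≤ a * Real.log c + b / c - a := by
  rcases ha.eq_or_lt with rfl | ha
  · have : 0 ≤ b / c := by positivity
    simpa using this
  · have hb' : 0 < b := lt_of_le_of_ne hb (fun e => ha.ne' (h e.symm))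
    have h1 := Real.log_le_sub_one_of_pos (show 0 < b / (a * c) by positivity)
    rw [Real.log_div hb'.ne' (by positivity), Real.log_mul ha.ne' hc.ne'] at h1
    have h2 := mul_le_mul_of_nonneg_left h1 ha.le
    have h3 : a * (b / (a * c) - 1) = b / c - a := by field_simp
    rw [h3] at h2
    linarith

lemma fan_logsum {ι : Type*} [Fintype ι] (a b : ι → ℝ) (ha : ∀ i, 0 ≤ a i) (hb : ∀ i, 0 ≤ b i)
    (h : ∀ i, b i = 0 → a i = 0) :
    ∑ i, a i * (Real.log (b i) - Real.log (a i))
      ≤ (∑ i, a i) * (Real.log (∑ i, b i) - Real.log (∑ i, a i)) := by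
  have hA0 : 0 ≤ ∑ i, a i := Finset.sum_nonneg fun i _ => ha i
  have hB0 : 0 ≤ ∑ i, b i := Finset.sum_nonneg fun i _ => hb i
  rcases hA0.eq_or_lt with hA | hA
  · have h0 : ∀ i, a i = 0 := fun i =>
      (Finset.sum_eq_zero_iff_of_nonneg (fun i _ => ha i)).1 hA.symm i (Finset.mem_univ i)
    simp [h0]
  · have hB : 0 < ∑ i, b i := by
      rcases hB0.eq_or_lt with hB | hB
      · have h0 : ∀ i, a i = 0 := fun i => h i <|
          (Finset.sum_eq_zero_iff_of_nonneg (fun i _ => hb i)).1 hB.symm i (Finset.mem_univ i)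
        simp [h0] at hA
      · exact hB
    set A := ∑ i, a i with hAd
    set B := ∑ i, b i with hBd
    have hc : 0 < B / A := by positivity
    calc ∑ i, a i * (Real.log (b i) - Real.log (a i))
        ≤ ∑ i, (a i * Real.log (B / A) + b i / (B / A) - a i) :=
          Finset.sum_le_sum fun i _ => fan_term _ _ _ (ha i) (hb i) (h i) hc
      _ = A * Real.log (B / A) + B / (B / A) - A := by
          rw [Finset.sum_sub_distrib, Finset.sum_add_distrib, ← Finset.sum_mul, ← Finset.sum_div]
      _ = A * (Real.log B - Real.log A) := by
          rw [Real.log_div hB.ne' hA.ne']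
          field_simp
          ring

/-- Unnormalised conditional entropy of one column, in nats. -/
def fanF {X : Type*} [Fintype X] (v : X → ℝ) : ℝ :=
  ∑ x, v x * (Real.log (∑ x, v x) - Real.log (v x))

lemma fanF_eq {X : Type*} [Fintype X] (v : X → ℝ) :
    fanF v = ∑ x, Real.negMulLog (v x) - Real.negMulLog (∑ x, v x) := by
  simp only [fanF, Real.negMulLog, mul_sub, Finset.sum_sub_distrib, ← Finset.sum_mul, neg_mul,
    Finset.sum_neg_distrib]
  ring

lemma fan_sum_zero {X : Type*} [Fintype X] (v : X → ℝ) (hv : ∀ x, 0 ≤ v x) (x : X)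
    (h : ∑ x, v x = 0) : v x = 0 :=
  (Finset.sum_eq_zero_iff_of_nonneg (fun i _ => hv i)).1 h x (Finset.mem_univ x)

lemma fanF_le {X : Type*} [Fintype X] (v : X → ℝ) (hv : ∀ x, 0 ≤ v x) :
    fanF v ≤ (∑ x, v x) * Real.log (Fintype.card X) := by
  have := fan_logsum v (fun _ => 1) hv (by simp) (by simp)
  simp only [Finset.sum_const, Finset.card_univ, nsmul_eq_mul, mul_one, Real.log_one] at this
  simp only [fanF, mul_sub, Finset.sum_sub_distrib, ← Finset.sum_mul, Finset.sum_const_zero,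
    mul_zero] at this ⊢
  linarith

lemma fanF_mono {X : Type*} [Fintype X] (m r : X → ℝ) (hm : ∀ x, 0 ≤ m x) (hr : ∀ x, 0 ≤ r x) :
    fanF m ≤ fanF (fun x => m x + r x) := by
  unfold fanF
  refine Finset.sum_le_sum fun x _ => ?_
  have hM : 0 ≤ ∑ x, m x := Finset.sum_nonneg fun i _ => hm i
  have hR : 0 ≤ ∑ x, r x := Finset.sum_nonneg fun i _ => hr i
  have h := fan_logsum (ι := Fin 2) ![m x, r x] ![∑ x, m x, ∑ x, r x]
    (by intro i; fin_cases i <;> simp [hm, hr])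
    (by intro i; fin_cases i <;> simp [hM, hR])
    (by
      intro i
      fin_cases i
      · exact fan_sum_zero m hm x
      · exact fan_sum_zero r hr x)
  simp only [Fin.sum_univ_two, Matrix.cons_val_zero, Matrix.cons_val_one] at h
  rw [Finset.sum_add_distrib]
  have h2 : 0 ≤ r x * (Real.log (∑ x, r x) - Real.log (r x)) := by
    rcases (hr x).eq_or_lt with e | e
    · simp [← e]
    · apply mul_nonneg e.le
      have : r x ≤ ∑ x, r x := Finset.single_le_sum (fun i _ => hr i) (Finset.mem_univ x)
      have := Real.log_le_log e this
      linarith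
  linarith

lemma fan_subadd (a b : ℝ) (ha : 0 ≤ a) (hb : 0 ≤ b) :
    Real.negMulLog (a + b) ≤ Real.negMulLog a + Real.negMulLog b := by
  rcases ha.eq_or_lt with rfl | ha
  · simp
  rcases hb.eq_or_lt with rfl | hb
  · simp
  have h1 : Real.log a ≤ Real.log (a + b) := Real.log_le_log ha (by linarith)
  have h2 : Real.log b ≤ Real.log (a + b) := Real.log_le_log hb (by linarith)
  unfold Real.negMulLog
  nlinarith

lemma fanF_add {X : Type*} [Fintype X] (m r : X → ℝ) (hm : ∀ x, 0 ≤ m x) (hr : ∀ x, 0 ≤ r x) :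
    fanF (fun x => m x + r x) ≤ fanF m + fanF r +
      ((∑ x, m x) * (Real.log (∑ x, m x + ∑ x, r x) - Real.log (∑ x, m x))
      + (∑ x, r x) * (Real.log (∑ x, m x + ∑ x, r x) - Real.log (∑ x, r x))) := by
  have h : ∑ x, Real.negMulLog (m x + r x)
      ≤ ∑ x, Real.negMulLog (m x) + ∑ x, Real.negMulLog (r x) := by
    rw [← Finset.sum_add_distrib]
    exact Finset.sum_le_sum fun x _ => fan_subadd _ _ (hm x) (hr x)
  rw [fanF_eq, fanF_eq, fanF_eq, Finset.sum_add_distrib]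
  simp only [Real.negMulLog] at *
  linarith

/-- One-sided bound with explicit decomposition. -/
lemma fan_one_sided {X Y : Type*} [Fintype X] [Fintype Y] (m r r' : Y → X → ℝ)
    (hm : ∀ y x, 0 ≤ m y x) (hr : ∀ y x, 0 ≤ r y x) (hr' : ∀ y x, 0 ≤ r' y x) (δ : ℝ)
    (hδ : ∑ y, ∑ x, r y x = δ) (hM : ∑ y, ∑ x, m y x = 1 - δ) :
    ∑ y, fanF (fun x => m y x + r y x) - ∑ y, fanF (fun x => m y x + r' y x)
      ≤ δ * Real.log (Fintype.card X) + Real.binEntropy δ := by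
  have hM0 : ∀ y, 0 ≤ ∑ x, m y x := fun y => Finset.sum_nonneg fun i _ => hm y i
  have hR0 : ∀ y, 0 ≤ ∑ x, r y x := fun y => Finset.sum_nonneg fun i _ => hr y i
  have h1 := Finset.sum_le_sum fun y (_ : y ∈ Finset.univ) => fanF_add (m y) (r y) (hm y) (hr y)
  have h2 := Finset.sum_le_sum fun y (_ : y ∈ Finset.univ) => fanF_mono (m y) (r' y) (hm y) (hr' y)
  have h3 := Finset.sum_le_sum fun y (_ : y ∈ Finset.univ) => fanF_le (r y) (hr y)
  have h4 := fan_logsum (fun y => ∑ x, m y x) (fun y => ∑ x, m y x + ∑ x, r y x) hM0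
    (fun y => add_nonneg (hM0 y) (hR0 y))
    (fun y h => by have := hM0 y; have := hR0 y; linarith)
  have h5 := fan_logsum (fun y => ∑ x, r y x) (fun y => ∑ x, m y x + ∑ x, r y x) hR0
    (fun y => add_nonneg (hM0 y) (hR0 y))
    (fun y h => by have := hM0 y; have := hR0 y; linarith)
  have h6 : ∑ y, (∑ x, m y x + ∑ x, r y x) = 1 := by
    rw [Finset.sum_add_distrib, hδ, hM]; ring
  rw [h6, hM] at h4
  rw [h6, hδ] at h5
  rw [← Finset.sum_mul, hδ] at h3
  simp only [Finset.sum_add_distrib] at h1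
  rw [Real.binEntropy_eq_negMulLog_add_negMulLog_one_sub]
  simp only [Real.negMulLog, Real.log_one] at *
  linarith

lemma fan_mono_log (a b : ℝ) (ha : 0 ≤ a) (hab : a ≤ b) (hb : b ≤ 1 / 4) :
    Real.negMulLog a ≤ Real.negMulLog b := by
  rcases ha.eq_or_lt with rfl | ha
  · simp only [Real.negMulLog_zero]
    exact Real.negMulLog_nonneg hab (by linarith)
  have hb0 : 0 < b := by linarith
  have h1 := Real.log_le_sub_one_of_pos (show 0 < b / a by positivity)
  rw [Real.log_div hb0.ne' ha.ne'] at h1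
  have h2 := mul_le_mul_of_nonneg_left h1 ha.le
  have h3 : a * (b / a - 1) = b - a := by field_simp
  have h4 : Real.log b ≤ Real.log (1 / 4) := Real.log_le_log hb0 hb
  have h5 : Real.log (1 / 4) = - (2 * Real.log 2) := by
    rw [show (1 / 4 : ℝ) = (2 ^ 2)⁻¹ by norm_num, Real.log_inv, Real.log_pow]; norm_num
  have h6 := Real.log_two_gt_d9
  have h7 : (b - a) * 1 ≤ (b - a) * (- Real.log b) :=
    mul_le_mul_of_nonneg_left (by linarith) (by linarith)
  unfold Real.negMulLog
  linarith

lemma fan_quarter : Real.negMulLog (1 / 4) = 1 / 2 * Real.log 2 := by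
  have h5 : Real.log (1 / 4) = - (2 * Real.log 2) := by
    rw [show (1 / 4 : ℝ) = (2 ^ 2)⁻¹ by norm_num, Real.log_inv, Real.log_pow]; norm_num
  rw [Real.negMulLog, h5]; ring

lemma fan_eta (t : ℝ) : eta t * Real.log 2 =
    if t ≤ 1 / 4 then Real.negMulLog t else 1 / 2 * Real.log 2 := by
  have h6 := Real.log_two_gt_d9
  unfold eta
  split_ifs
  · rw [Real.negMulLog, Real.logb]
    field_simp
  · rfl

lemma fan_scalar (δ ε D : ℝ) (hδ : 0 ≤ δ) (hδ1 : δ ≤ 1) (h : 2 * δ ≤ ε) (hD : Real.log 2 ≤ D) :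
    δ * D + Real.binEntropy δ ≤ eta (2 * ε) * Real.log 2 + 3 * ε * D := by
  have h6 := Real.log_two_gt_d9
  have hDε : 2 * δ * D ≤ ε * D := mul_le_mul_of_nonneg_right h (by linarith)
  have hDδ : δ * (1 / 5) ≤ δ * D := mul_le_mul_of_nonneg_left (by linarith) hδ
  rw [fan_eta]
  have hb : Real.binEntropy δ ≤ Real.negMulLog δ + δ := by
    rw [Real.binEntropy_eq_negMulLog_add_negMulLog_one_sub]
    have := fan_term (1 - δ) 1 1 (by linarith) (by norm_num) (by norm_num) (by norm_num)
    simp only [Real.log_one] at this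
    simp only [Real.negMulLog]
    linarith
  split_ifs with hc
  · have := fan_mono_log δ (2 * ε) hδ (by linarith) hc
    linarith
  · by_cases hd : δ ≤ 1 / 4
    · have := fan_mono_log δ (1 / 4) hδ hd le_rfl
      rw [fan_quarter] at this
      linarith
    · have h1 := Real.binEntropy_le_log_two (p := δ)
      have : 1 / 4 * D ≤ δ * D := mul_le_mul_of_nonneg_right (by linarith) (by linarith)
      linarith

lemma fan_cond {X Y : Type*} [Fintype X] [Fintype Y] (P : X × Y → ℝ) :
    (shannonEntropy P - shannonEntropy (fun y => ∑ x, P (x, y))) * Real.log 2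
      = ∑ y, fanF (fun x => P (x, y)) := by
  have h6 := Real.log_two_gt_d9
  have h : ∀ {S : Type _} [Fintype S] (R : S → ℝ),
      shannonEntropy R * Real.log 2 = ∑ s, Real.negMulLog (R s) := by
    intro S _ R
    rw [shannonEntropy, Finset.sum_mul]
    refine Finset.sum_congr rfl fun s _ => ?_
    rw [Real.negMulLog, Real.logb]
    field_simp
  have h' : ∀ {S : Type _} [Fintype S] (R : S → ℝ),
      shannonEntropy R * Real.log 2 = ∑ s, Real.negMulLog (R s) := by
    intro S _ R
    rw [shannonEntropy, Finset.sum_mul]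
    refine Finset.sum_congr rfl fun s _ => ?_
    rw [Real.negMulLog, Real.logb]
    field_simp
  rw [sub_mul, h, h', Fintype.sum_prod_type_right, ← Finset.sum_sub_distrib]
  exact Finset.sum_congr rfl fun y _ => (fanF_eq _).symm

lemma fan_half {X Y : Type*} [Fintype X] [Fintype Y]
    (P Q : X × Y → ℝ)
    (hP : ∀ z, 0 ≤ P z) (hP1 : (∑ z, P z) = 1)
    (hQ : ∀ z, 0 ≤ Q z) (hQ1 : (∑ z, Q z) = 1)
    (ε : ℝ) (hPQ : ∑ z, |P z - Q z| ≤ ε) :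
    ∑ y, fanF (fun x => P (x, y)) - ∑ y, fanF (fun x => Q (x, y))
      ≤ eta (2 * ε) * Real.log 2 + 3 * ε * Real.log (Fintype.card X) := by
  have hε : 0 ≤ ε := le_trans (Finset.sum_nonneg fun i _ => abs_nonneg _) hPQ
  by_cases hX : Fintype.card X ≤ 1
  · have hs : Subsingleton X := Fintype.card_le_one_iff_subsingleton.1 hX
    have h0 : ∀ v : X → ℝ, fanF v = 0 := by
      intro v
      unfold fanF
      refine Finset.sum_eq_zero fun x _ => ?_
      rw [Fintype.sum_subsingleton _ x]
      simp
    have h1 : Real.log (Fintype.card X) = 0 := by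
      interval_cases Fintype.card X <;> simp
    simp only [h0, h1, Finset.sum_const_zero, fan_eta]
    split_ifs with hc
    · have := Real.negMulLog_nonneg (x := 2 * ε) (by linarith) (by linarith)
      linarith
    · have h6 := Real.log_two_gt_d9
      linarith
  · have hD : Real.log 2 ≤ Real.log (Fintype.card X) := by
      apply Real.log_le_log (by norm_num)
      exact_mod_cast (by omega : 2 ≤ Fintype.card X)
    have hr : ∑ z, (P z - min (P z) (Q z)) = 1 - ∑ z, min (P z) (Q z) := by
      rw [Finset.sum_sub_distrib, hP1]
    have habs : ∑ z, |P z - Q z| = 2 - 2 * ∑ z, min (P z) (Q z) := by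
      have : ∀ z, |P z - Q z| = P z + Q z - 2 * min (P z) (Q z) := by
        intro z
        rcases le_total (P z) (Q z) with h | h
        · rw [min_eq_left h, abs_of_nonpos (by linarith)]; ring
        · rw [min_eq_right h, abs_of_nonneg (by linarith)]; ring
      simp only [this, Finset.sum_sub_distrib, Finset.sum_add_distrib, hP1, hQ1, ← Finset.mul_sum]
      norm_num
    have hM0 : 0 ≤ ∑ z, min (P z) (Q z) := Finset.sum_nonneg fun z _ => le_min (hP z) (hQ z)
    have hδ0 : 0 ≤ ∑ z, (P z - min (P z) (Q z)) :=
      Finset.sum_nonneg fun z _ => sub_nonneg.2 (min_le_left _ _)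
    have key := fan_one_sided (fun y x => min (P (x, y)) (Q (x, y)))
      (fun y x => P (x, y) - min (P (x, y)) (Q (x, y)))
      (fun y x => Q (x, y) - min (P (x, y)) (Q (x, y)))
      (fun y x => le_min (hP _) (hQ _)) (fun y x => sub_nonneg.2 (min_le_left _ _))
      (fun y x => sub_nonneg.2 (min_le_right _ _))
      (∑ z, (P z - min (P z) (Q z)))
      (by rw [Fintype.sum_prod_type_right])
      (by rw [hr, Fintype.sum_prod_type_right]; ring)
    simp only [add_sub_cancel] at key
    exact key.trans (fan_scalar _ _ _ hδ0 (by linarith) (by linarith) hD)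

/-- Fannes-type inequality for classical conditional entropy: if
`∑_{x,y} |P(x,y) - Q(x,y)| ≤ ε` then
`|H(X|Y)_P - H(X|Y)_Q| ≤ η(2ε) + 3ε log₂ |X|`. -/
theorem classical_condEntropy_fannes
    {X Y : Type*} [Fintype X] [Fintype Y]
    (P Q : X × Y → ℝ)
    (hP : ∀ z, 0 ≤ P z) (hP1 : (∑ z, P z) = 1)
    (hQ : ∀ z, 0 ≤ Q z) (hQ1 : (∑ z, Q z) = 1)
    (ε : ℝ) (hPQ : ∑ z, |P z - Q z| ≤ ε) :
    |(shannonEntropy P - shannonEntropy (fun y => ∑ x, P (x, y)))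
        - (shannonEntropy Q - shannonEntropy (fun y => ∑ x, Q (x, y)))|
      ≤ eta (2 * ε) + 3 * ε * Real.logb 2 (Fintype.card X) := by
  have h6 := Real.log_two_gt_d9
  have h1 := fan_half P Q hP hP1 hQ hQ1 ε hPQ
  have h2 := fan_half Q P hQ hQ1 hP hP1 ε (by simpa only [abs_sub_comm] using hPQ)
  rw [← fan_cond, ← fan_cond] at h1 h2
  have hlog : 0 < Real.log 2 := by linarith
  have h3 : 3 * ε * Real.log (Fintype.card X)
      = 3 * ε * Real.logb 2 (Fintype.card X) * Real.log 2 := by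
    rw [Real.logb]; field_simp
  rw [h3, ← sub_mul, ← add_mul] at h1 h2
  have h1' := le_of_mul_le_mul_right h1 hlog
  have h2' := le_of_mul_le_mul_right h2 hlog
  rw [abs_le]
  constructor <;> linarith

end
end
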